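/- Let F_81 be the field with 81 elements, F_3 its prime subfield, and N = {(λ, λ^{-1}·I_2) : λ ∈ F_3^×} ≤ F_81^× × GL_2(F_3). Then: (1) the quotient group (F_81^× × GL_2(F_3))/N contains an element of order 80 (namely the class of (α, I_2) for α a generator of F_81^×); (2) the group GL_2(F_3) contains no element of order 16; and consequently (3) the direct product (F_81^×/F_3^×) × GL_2(F_3) contains no element of order 80. -/

import Mathlib

open Matrix
open scoped MatrixGroups

/-- The homomorphism `F_3^× → K^× × GL_2(F_3)`, `λ ↦ (λ, λ⁻¹ • I_2)`, where `K` is the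
field with 81 elements and `F_3 = ZMod 3` its prime field. -/
def psi81 (K : Type*) [Field K] [CharP K 3] :
    (ZMod 3)ˣ →* Kˣ × GL (Fin 2) (ZMod 3) :=
  (Units.map (ZMod.castHom (dvd_refl 3) K).toMonoidHom).prod
    ((Units.map (algebraMap (ZMod 3) (Matrix (Fin 2) (Fin 2) (ZMod 3))).toMonoidHom).comp
      invMonoidHom)

/-- The subgroup `N = {(λ, λ⁻¹ I_2) : λ ∈ F_3^×} ≤ F_81^× × GL_2(F_3)`. -/
def N81 (K : Type*) [Field K] [CharP K 3] : Subgroup (Kˣ × GL (Fin 2) (ZMod 3)) :=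
  (psi81 K).range

instance N81_normal (K : Type*) [Field K] [CharP K 3] : (N81 K).Normal := by
  constructor
  intro n hn g
  obtain ⟨lam, rfl⟩ := hn
  have hcomm : psi81 K lam * g = g * psi81 K lam := by
    apply Prod.ext
    · exact mul_comm _ _
    · apply Units.ext
      show ((psi81 K lam).2 : Matrix (Fin 2) (Fin 2) (ZMod 3)) * (g.2 : Matrix (Fin 2) (Fin 2) (ZMod 3))
        = (g.2 : Matrix (Fin 2) (Fin 2) (ZMod 3)) * ((psi81 K lam).2 : Matrix (Fin 2) (Fin 2) (ZMod 3))
      have : ((psi81 K lam).2 : Matrix (Fin 2) (Fin 2) (ZMod 3))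
          = algebraMap (ZMod 3) (Matrix (Fin 2) (Fin 2) (ZMod 3)) ((lam⁻¹ : (ZMod 3)ˣ) : ZMod 3) := rfl
      rw [this]
      exact Algebra.commutes _ _
  have : g * psi81 K lam * g⁻¹ = psi81 K lam := by
    rw [← hcomm]; group
  rw [this]
  exact ⟨lam, rfl⟩

/-- The image of `F_3^×` in `F_81^×`. -/
def F3units (K : Type*) [Field K] [CharP K 3] : Subgroup Kˣ :=
  (Units.map (ZMod.castHom (dvd_refl 3) K).toMonoidHom).range

/-!
Over a finite field with `q` elements, of characteristic `p`, every irreducible polynomial of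
degree `d` divides `X ^ q ^ d - X`. If `q ^ d - 1 ∣ N` for all `1 ≤ d ≤ n ≤ p ^ k`, then every
irreducible factor of the characteristic polynomial of an `n × n` matrix divides `X ^ (N + 1) - X`,
so the characteristic polynomial itself divides
`(X ^ (N + 1) - X) ^ p ^ k = X ^ ((N + 1) * p ^ k) - X ^ p ^ k`. By Cayley-Hamilton the exponent of
`GL_n` divides `N * p ^ k`; for `GL_2(F_3)` take `N = 8` and `p ^ k = 3`.

The projection to `GL_2` is injective on `N81 K`, so `N81 K` meets `Kˣ × 1` trivially and passing
to the quotient preserves the order of `(α, 1)`. In the direct product, on the other hand, orders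
divide `lcm 40 24 = 120`.
-/

section FiniteFieldMatrices

open Polynomial

variable {F : Type*} [Field F]

theorem dvd_pow_natDegree_of_forall_irreducible_dvd {f g : F[X]} (hf : f ≠ 0)
    (h : ∀ r, Irreducible r → r ∣ f → r ∣ g) : f ∣ g ^ f.natDegree := by
  induction f using WfDvdMonoid.induction_on_irreducible with
  | zero => exact absurd rfl hf
  | unit u hu => exact hu.dvd
  | mul a r ha hr ih =>
    have hr_dvd : r ∣ g := h r hr (dvd_mul_right r a)
    have ha_dvd : a ∣ g ^ a.natDegree := ih ha fun s hs hsa => h s hs (hsa.mul_left r)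
    rw [natDegree_mul hr.ne_zero ha, pow_add]
    exact mul_dvd_mul (hr_dvd.trans (dvd_pow_self g hr.natDegree_pos.ne')) ha_dvd

theorem irreducible_dvd_X_pow_succ_sub_X [Finite F] {f : F[X]} (hf : Irreducible f) {N : ℕ}
    (hN : Nat.card F ^ f.natDegree - 1 ∣ N) : f ∣ X ^ (N + 1) - X := by
  have h_frob : f ∣ X ^ Nat.card F ^ f.natDegree - X :=
    hf.natDegree_dvd_iff_dvd_X_pow_card_pow_sub_X.mp dvd_rfl
  have h_pos : 0 < Nat.card F ^ f.natDegree := pow_pos Nat.card_pos _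
  calc f ∣ X ^ Nat.card F ^ f.natDegree - X := h_frob
    _ = X * (X ^ (Nat.card F ^ f.natDegree - 1) - 1) := by
      rw [mul_sub_one, mul_pow_sub_one h_pos.ne']
    _ ∣ X * (X ^ N - 1) := mul_dvd_mul_left X (dvd_pow_sub_one_of_dvd hN)
    _ = X ^ (N + 1) - X := by rw [mul_sub_one, ← pow_succ']

variable [Finite F] {n : Type*} [Fintype n] [DecidableEq n] {p k N : ℕ} [ExpChar F p]

theorem matrix_pow_eq_pow_of_forall_card_pow_sub_one_dvd (hk : Fintype.card n ≤ p ^ k)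
    (hN : ∀ d, 0 < d → d ≤ Fintype.card n → Nat.card F ^ d - 1 ∣ N) (M : Matrix n n F) :
    M ^ ((N + 1) * p ^ k) = M ^ p ^ k := by
  have h_factor (r : F[X]) (hr : Irreducible r) (hrM : r ∣ M.charpoly) :
      r ∣ X ^ (N + 1) - X := by
    refine irreducible_dvd_X_pow_succ_sub_X hr (hN _ hr.natDegree_pos ?_)
    exact M.charpoly_natDegree_eq_dim ▸ natDegree_le_of_dvd hrM M.charpoly_monic.ne_zero
  have h_charpoly : M.charpoly ∣ X ^ ((N + 1) * p ^ k) - X ^ p ^ k :=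
    calc M.charpoly ∣ (X ^ (N + 1) - X) ^ M.charpoly.natDegree :=
          dvd_pow_natDegree_of_forall_irreducible_dvd M.charpoly_monic.ne_zero h_factor
      _ ∣ (X ^ (N + 1) - X) ^ p ^ k := pow_dvd_pow _ (M.charpoly_natDegree_eq_dim.trans_le hk)
      _ = X ^ ((N + 1) * p ^ k) - X ^ p ^ k := by rw [sub_pow_expChar_pow, ← pow_mul]
  have h_aeval : aeval M (X ^ ((N + 1) * p ^ k) - X ^ p ^ k : F[X]) = 0 :=
    aeval_eq_zero_of_dvd_aeval_eq_zero h_charpoly M.aeval_self_charpoly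
  simpa [sub_eq_zero] using h_aeval

theorem exponent_GL_dvd_of_forall_card_pow_sub_one_dvd (hk : Fintype.card n ≤ p ^ k)
    (hN : ∀ d, 0 < d → d ≤ Fintype.card n → Nat.card F ^ d - 1 ∣ N) :
    Monoid.exponent (GL n F) ∣ N * p ^ k := by
  refine Monoid.exponent_dvd_of_forall_pow_eq_one fun B => ?_
  have h_pow : B ^ ((N + 1) * p ^ k) = B ^ p ^ k := by
    ext1
    simpa only [Units.val_pow_eq_pow_val] using
      matrix_pow_eq_pow_of_forall_card_pow_sub_one_dvd hk hN B.val
  rwa [add_one_mul, pow_add, mul_eq_right] at h_pow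

end FiniteFieldMatrices

theorem exponent_GL_two_zmod_three_dvd : Monoid.exponent (GL (Fin 2) (ZMod 3)) ∣ 24 := by
  refine exponent_GL_dvd_of_forall_card_pow_sub_one_dvd (p := 3) (k := 1) (N := 8) (by simp) ?_
  intro d hd_pos hd_le
  rw [Fintype.card_fin] at hd_le
  rw [Nat.card_zmod]
  interval_cases d <;> decide

section Quotients

variable {G A B : Type*} [Group G] [Group A] [Group B]

theorem orderOf_quotient_mk_of_disjoint_zpowers {N : Subgroup G} [N.Normal] {g : G}
    (h : Disjoint (Subgroup.zpowers g) N) : orderOf (g : G ⧸ N) = orderOf g := by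
  refine orderOf_eq_orderOf_iff.mpr fun n => ?_
  rw [← QuotientGroup.mk_pow, QuotientGroup.eq_one_iff]
  exact ⟨Subgroup.disjoint_def.mp h (Subgroup.npow_mem_zpowers g n), fun hg => hg ▸ N.one_mem⟩

theorem disjoint_range_inl_range_prod (f : G →* A) {g : G →* B} (hg : Function.Injective g) :
    Disjoint (MonoidHom.inl A B).range (f.prod g).range := by
  rw [Subgroup.disjoint_def]
  rintro _ ⟨a, rfl⟩ ⟨c, hc⟩
  have hc_one : c = 1 := hg ((congrArg Prod.snd hc).trans (map_one g).symm)
  rw [← hc, hc_one, map_one]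

end Quotients

section CharacteristicThree

variable (K : Type*) [Field K] [CharP K 3]

theorem disjoint_range_inl_N81 :
    Disjoint (MonoidHom.inl Kˣ (GL (Fin 2) (ZMod 3))).range (N81 K) :=
  disjoint_range_inl_range_prod _ <|
    (Units.map_injective (algebraMap (ZMod 3) _).injective).comp inv_injective

theorem orderOf_mk_N81_inl (α : Kˣ) :
    orderOf (QuotientGroup.mk (s := N81 K) (α, (1 : GL (Fin 2) (ZMod 3)))) = orderOf α := by
  have h_zpowers : Subgroup.zpowers (MonoidHom.inl Kˣ (GL (Fin 2) (ZMod 3)) α) ≤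
      (MonoidHom.inl _ _).range := Subgroup.zpowers_le.mpr ⟨α, rfl⟩
  calc orderOf (QuotientGroup.mk (s := N81 K) (α, (1 : GL (Fin 2) (ZMod 3))))
      = orderOf (MonoidHom.inl Kˣ (GL (Fin 2) (ZMod 3)) α) :=
        orderOf_quotient_mk_of_disjoint_zpowers ((disjoint_range_inl_N81 K).mono_left h_zpowers)
    _ = orderOf α := by simp [Prod.orderOf_mk]

theorem card_F3units : Nat.card (F3units K) = 2 := by
  have h_inj : Function.Injective (Units.map (ZMod.castHom (dvd_refl 3) K).toMonoidHom) :=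
    Units.map_injective (ZMod.castHom (dvd_refl 3) K).injective
  rw [F3units, ← Nat.card_congr (MonoidHom.ofInjective h_inj).toEquiv, Nat.card_units,
    Nat.card_zmod]

theorem card_quotient_F3units_mul_two : Nat.card (Kˣ ⧸ F3units K) * 2 = Nat.card K - 1 := by
  rw [← card_F3units K, ← Subgroup.card_eq_card_quotient_mul_card_subgroup, Nat.card_units]

end CharacteristicThree

/-- **Element orders distinguishing the two groups (Example 3.3).**
(1) If `α` generates `F_81^×`, then the class of `(α, I_2)` in
`(F_81^× × GL_2(F_3))/N` has order 80; (2) `GL_2(F_3)` has no element of order 16;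
consequently (3) `(F_81^×/F_3^×) × GL_2(F_3)` has no element of order 80. -/
theorem element_orders_distinguish
    (K : Type*) [Field K] [Fintype K] [CharP K 3] (hK : Fintype.card K = 81) :
    (∀ α : Kˣ, (∀ g : Kˣ, g ∈ Subgroup.zpowers α) →
      orderOf (QuotientGroup.mk (s := N81 K) (α, (1 : GL (Fin 2) (ZMod 3)))) = 80) ∧
    (∀ B : GL (Fin 2) (ZMod 3), orderOf B ≠ 16) ∧
    (∀ x : (Kˣ ⧸ F3units K) × GL (Fin 2) (ZMod 3), orderOf x ≠ 80) := by
  have h_card : Nat.card K = 81 := by rw [Nat.card_eq_fintype_card, hK]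
  refine ⟨fun α hα => ?_, fun B hB => ?_, fun x hx => ?_⟩
  · rw [orderOf_mk_N81_inl, orderOf_eq_card_of_forall_mem_zpowers hα, Nat.card_units, h_card]
  · have h_dvd : 16 ∣ 24 := hB ▸ (Monoid.order_dvd_exponent B).trans exponent_GL_two_zmod_three_dvd
    omega
  · have h_card_quot : Nat.card (Kˣ ⧸ F3units K) = 40 := by
      have h_mul_two := card_quotient_F3units_mul_two K
      omega
    have h_quot : Monoid.exponent (Kˣ ⧸ F3units K) ∣ 40 :=
      h_card_quot ▸ Group.exponent_dvd_nat_card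
    have h_dvd : 80 ∣ lcm 40 24 :=
      calc 80 = orderOf x := hx.symm
        _ ∣ Monoid.exponent ((Kˣ ⧸ F3units K) × GL (Fin 2) (ZMod 3)) := Monoid.order_dvd_exponent x
        _ = lcm (Monoid.exponent _) (Monoid.exponent _) := Monoid.exponent_prod
        _ ∣ lcm 40 24 := lcm_dvd_lcm h_quot exponent_GL_two_zmod_three_dvd
    exact absurd h_dvd (by decide)
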